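/- arXiv:2504.14198 — 2 statements merged into one kernel-verified Lean document; each statement's English description precedes it below -/
import Mathlib

section
/- Let F be a field with char(F) ∉ {2, 3} such that the polynomial x² + x + 1 is reducible in F[x]. Then Λ_3(F) = {I, −I}. -/
open Matrix Polynomial

/-- The set of matrices that are products of three involutions. -/
def ProdInv3 (F : Type*) [Field F] (n : ℕ) : Set (Matrix (Fin n) (Fin n) F) :=
  {A | ∃ J₁ J₂ J₃ : Matrix (Fin n) (Fin n) F,
    J₁ * J₁ = 1 ∧ J₂ * J₂ = 1 ∧ J₃ * J₃ = 1 ∧ A = J₁ * J₂ * J₃}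

/-- `Λ_n(F)`: matrices whose left multiplication preserves products of three involutions. -/
def LambdaSet (F : Type*) [Field F] (n : ℕ) : Set (Matrix (Fin n) (Fin n) F) :=
  {P | ∀ A ∈ ProdInv3 F n, P * A ∈ ProdInv3 F n}

/-!
Two facts determine the products of three involutions among 3×3 matrices over a field `F` in which
`3 ≠ 0`. A nonscalar matrix of determinant `±1` is always such a product: up to sign its determinant
is `-1`, and then it is similar either to a companion matrix or to a direct sum of a `1×1` and a
`2×2` companion block, both of which factor explicitly. A scalar `c` is such a product only if
`c² = 1`: if `c = JKL`, then `JKJ = c²K`, and the involution `K` has nonzero trace.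

Now let `P ∈ Λ₃(F)`, so that `P = P * 1` is itself a product of three involutions, and let `ω` be a
primitive cube root of unity. If `P` were not scalar, then `ωP⁻¹`, nonscalar of determinant `±1`,
would be a product of three involutions, hence so would `P(ωP⁻¹) = ω`, although `ω² ≠ 1`.
-/

theorem exists_isPrimitiveRoot_three {F : Type*} [Field F] (h3 : (3 : F) ≠ 0)
    (hred : ¬ Irreducible (X ^ 2 + X + 1 : F[X])) : ∃ ω : F, IsPrimitiveRoot ω 3 := by
  have : NeZero ((3 : ℕ) : F) := ⟨by exact_mod_cast h3⟩
  contrapose! hred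
  refine irreducible_of_degree_le_three_of_not_isRoot ?_ fun ω hω => hred ω ?_
  · have hdeg : (X ^ 2 + X + 1 : F[X]).natDegree = 2 := by compute_degree!
    simp [hdeg]
  · rwa [← isRoot_cyclotomic_iff, cyclotomic_three]

section SquareMatrices

variable {m F : Type*} [Fintype m] [Field F]

theorem exists_linearIndependent_mulVec_of_notMem_center {A : Matrix m m F}
    (hA : A ∉ Set.center (Matrix m m F)) : ∃ v, LinearIndependent F ![v, A *ᵥ v] := by
  classical
  contrapose! hA
  obtain ⟨c, hc⟩ := LinearMap.exists_eq_smul_id_of_forall_notLinearIndependent (f := A.toLin') hA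
  rw [center_eq_range]
  refine ⟨c, toLin'.injective ?_⟩
  rw [hc]
  ext i j
  simp [Pi.single_apply]

variable [DecidableEq m]

theorem det_eq_of_isConj {R : Type*} [CommRing R] {A B : Matrix m m R} (h : IsConj A B) :
    A.det = B.det :=
  isConj_iff_eq.mp (detMonoidHom.map_isConj h)

theorem adjugate_eq_det_smul_of_mul_self_eq_one {R : Type*} [CommRing R] {J : Matrix m m R}
    (hJ : J * J = 1) : J.adjugate = J.det • J :=
  calc J.adjugate = J.adjugate * J * J := by rw [mul_assoc, hJ, mul_one]
    _ = J.det • J := by rw [adjugate_mul, smul_mul_assoc, one_mul]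

theorem trace_sq_fin_three {R : Type*} [CommRing R] (A : Matrix (Fin 3) (Fin 3) R) :
    A.trace ^ 2 = (A * A).trace + 2 * A.adjugate.trace := by
  simp only [adjugate_fin_three, trace_fin_three, mul_apply, Fin.sum_univ_three, of_apply, cons_val]
  ring

theorem trace_ne_zero_of_mul_self_eq_one {R : Type*} [CommRing R] (h3 : (3 : R) ≠ 0)
    {J : Matrix (Fin 3) (Fin 3) R} (hJ : J * J = 1) : J.trace ≠ 0 := by
  intro htr
  have hadj : J.adjugate.trace = 0 := by
    rw [adjugate_eq_det_smul_of_mul_self_eq_one hJ, trace_smul, htr, smul_zero]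
  have hsq := trace_sq_fin_three J
  rw [hJ, hadj, htr, trace_one, Fintype.card_fin] at hsq
  exact h3 (by simpa using hsq.symm)

theorem exists_isConj_col_eq_single (A : Matrix m m F) {v : m → m → F}
    (hv : LinearIndependent F v) :
    ∃ B, IsConj B A ∧ ∀ j k, A *ᵥ v j = v k → B.col j = Pi.single k 1 := by
  obtain ⟨S, hS⟩ : IsUnit (of v)ᵀ := by
    rw [isUnit_transpose]
    exact linearIndependent_rows_iff_isUnit.mp hv
  have hcol (j : m) : (S : Matrix m m F) *ᵥ Pi.single j 1 = v j := by
    rw [mulVec_single_one, hS]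
    rfl
  refine ⟨(↑S⁻¹ : Matrix m m F) * A * S, ⟨S, ?_⟩, fun j k hjk => ?_⟩
  · simp [SemiconjBy, mul_assoc]
  · rw [← mulVec_single_one, ← mulVec_mulVec, hcol, ← mulVec_mulVec, hjk, ← hcol, mulVec_mulVec,
      Units.inv_mul, one_mulVec]

theorem smul_inv_notMem_center {A : Matrix m m F} (hA : A ∉ Set.center (Matrix m m F))
    (hdet : IsUnit A.det) {c : F} (hc : c ≠ 0) : c • A⁻¹ ∉ Set.center (Matrix m m F) := by
  contrapose! hA
  have hinv : A⁻¹ ∈ Set.center (Matrix m m F) := by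
    rw [← inv_smul_smul₀ hc A⁻¹]
    exact Set.smul_mem_center c⁻¹ hA
  have h := Set.units_inv_mem_center (a := (A.nonsingInvUnit hdet)⁻¹) hinv
  rwa [inv_inv] at h

end SquareMatrices

section ProdInv3

variable {F : Type*} [Field F] {n : ℕ} {A B : Matrix (Fin n) (Fin n) F}

theorem one_mem_prodInv3 : (1 : Matrix (Fin n) (Fin n) F) ∈ ProdInv3 F n :=
  ⟨1, 1, 1, by simp⟩

theorem neg_mem_prodInv3 (hA : A ∈ ProdInv3 F n) : -A ∈ ProdInv3 F n := by
  obtain ⟨J, K, L, hJ, hK, hL, rfl⟩ := hA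
  exact ⟨-J, K, L, by rwa [neg_mul_neg], hK, hL, by rw [neg_mul, neg_mul]⟩

theorem mem_prodInv3_of_isConj (h : IsConj A B) (hA : A ∈ ProdInv3 F n) : B ∈ ProdInv3 F n := by
  obtain ⟨S, hS⟩ := h
  obtain ⟨J, K, L, hJ, hK, hL, rfl⟩ := hA
  let g := ConjAct.toConjAct S
  have hB : B = g • (J * K * L) := by
    rw [ConjAct.units_smul_def, ConjAct.ofConjAct_toConjAct, hS.eq, mul_assoc, Units.mul_inv,
      mul_one]
  refine ⟨g • J, g • K, g • L, ?_, ?_, ?_, ?_⟩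
  · rw [← smul_mul', hJ, smul_one]
  · rw [← smul_mul', hK, smul_one]
  · rw [← smul_mul', hL, smul_one]
  · rw [hB, smul_mul', smul_mul']

theorem det_sq_eq_one_of_mem_prodInv3 (hA : A ∈ ProdInv3 F n) : A.det ^ 2 = 1 := by
  obtain ⟨J, K, L, hJ, hK, hL, rfl⟩ := hA
  have det_mul_self {M : Matrix (Fin n) (Fin n) F} (hM : M * M = 1) : M.det * M.det = 1 := by
    rw [← det_mul, hM, det_one]
  calc (J * K * L).det ^ 2 = J.det * J.det * (K.det * K.det) * (L.det * L.det) := by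
        rw [det_mul, det_mul]
        ring
    _ = 1 := by rw [det_mul_self hJ, det_mul_self hK, det_mul_self hL, one_mul, one_mul]

theorem one_mem_lambdaSet : (1 : Matrix (Fin n) (Fin n) F) ∈ LambdaSet F n :=
  fun A hA => by rwa [one_mul]

theorem neg_one_mem_lambdaSet : (-1 : Matrix (Fin n) (Fin n) F) ∈ LambdaSet F n :=
  fun A hA => by simpa using neg_mem_prodInv3 hA

theorem mem_prodInv3_of_mem_lambdaSet (hA : A ∈ LambdaSet F n) : A ∈ ProdInv3 F n := by
  simpa using hA 1 one_mem_prodInv3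

end ProdInv3

section ThreeByThree

variable {F : Type*} [Field F]

theorem sq_eq_one_of_smul_one_mem_prodInv3 (h3 : (3 : F) ≠ 0) {c : F}
    (hc : c • (1 : Matrix (Fin 3) (Fin 3) F) ∈ ProdInv3 F 3) : c ^ 2 = 1 := by
  obtain ⟨J, K, L, hJ, hK, hL, h⟩ := hc
  have hJK : J * K = c • L := by
    calc J * K = J * K * L * L := by rw [mul_assoc _ L, hL, mul_one]
      _ = c • L := by rw [← h, smul_mul_assoc, one_mul]
  have hJKJ : J * K * J = c ^ 2 • K := by
    calc J * K * J = (J * K) * (J * K) * K := by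
          simp only [mul_assoc, hK, mul_one]
      _ = c ^ 2 • K := by
          rw [hJK, smul_mul_smul_comm, hL, smul_mul_assoc, one_mul, sq]
  have htr : K.trace = c ^ 2 * K.trace := by
    calc K.trace = (J * K * J).trace := by rw [trace_mul_comm, ← mul_assoc, hJ, one_mul]
      _ = c ^ 2 * K.trace := by rw [hJKJ, trace_smul, smul_eq_mul]
  exact (right_eq_mul₀ (trace_ne_zero_of_mul_self_eq_one h3 hK)).mp htr

theorem companion_mem_prodInv3 (b c : F) : !![0, 0, -1; 1, 0, b; 0, 1, c] ∈ ProdInv3 F 3 := by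
  refine ⟨!![0, 1, 0; 1, 0, 0; 0, 0, 1], !![1, 0, 0; 0, 0, 1; 0, 1, 0],
    !![1, 0, b; 0, 1, c; 0, 0, -1], ?_, ?_, ?_, ?_⟩ <;>
  simp [one_fin_three]

theorem mem_prodInv3_of_linearIndependent_iterates {A : Matrix (Fin 3) (Fin 3) F}
    (hdet : A.det = -1) {u : Fin 3 → F}
    (hu : LinearIndependent F ![u, A *ᵥ u, A *ᵥ (A *ᵥ u)]) : A ∈ ProdInv3 F 3 := by
  obtain ⟨B, hBA, hB⟩ := exists_isConj_col_eq_single A hu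
  have hcol₀ : B.col 0 = Pi.single 1 1 := hB 0 1 rfl
  have hcol₁ : B.col 1 = Pi.single 2 1 := hB 1 2 rfl
  rw [← det_eq_of_isConj hBA] at hdet
  refine mem_prodInv3_of_isConj hBA ?_
  have hB_eq : B = !![0, 0, B 0 2; 1, 0, B 1 2; 0, 1, B 2 2] := by
    ext i j
    have h₀ := congrFun hcol₀ i
    have h₁ := congrFun hcol₁ i
    fin_cases i <;> fin_cases j <;> simp_all
  have hcorner : B 0 2 = -1 := by
    rw [hB_eq, det_fin_three] at hdet
    simpa using hdet
  rw [hB_eq, hcorner]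
  exact companion_mem_prodInv3 _ _

theorem block_mem_prodInv3 {a d : F} (had : a * d = 1) (f : F) :
    !![a, 0, 0; 0, 0, d; 0, 1, f] ∈ ProdInv3 F 3 := by
  by_cases hd : d = 1
  · obtain rfl : a = 1 := by rwa [hd, mul_one] at had
    subst hd
    refine ⟨!![1, 0, 0; 0, 0, 1; 0, 1, 0], !![1, 0, 0; 0, 1, 0; 0, 0, -1],
      !![1, 0, 0; 0, 1, f; 0, 0, -1], ?_, ?_, ?_, ?_⟩ <;>
    simp [one_fin_three]
  · -- The first two factors are those of `diag(a, d, 1)`, conjugated by the transvection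
    -- `1 + k E₁₂` (0-based indices) so that their product has `(1, 2)` entry `k * (1 - d)`.
    obtain ⟨k, hk⟩ : ∃ k, k * (1 - d) = d * f :=
      ⟨d * f / (1 - d), div_mul_cancel₀ _ (sub_ne_zero.mpr (Ne.symm hd))⟩
    refine ⟨!![0, a, -k * a; d, 0, k; 0, 0, 1], !![0, 1, -k; 1, 0, k; 0, 0, 1],
      !![1, 0, 0; 0, -f, 1 - f ^ 2; 0, 1, f], ?_, ?_, ?_, ?_⟩
    · have hda : d * a = 1 := by rw [mul_comm, had]
      have hcol : a * k + -(k * a) = 0 := by ring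
      have hcol' : -(d * (k * a)) + k = 0 := by linear_combination -k * had
      simp [one_fin_three, had, hda, hcol, hcol']
    · simp [one_fin_three]
    · ext i j
      fin_cases i <;> fin_cases j <;> simp <;> ring
    · have hprod : !![0, a, -k * a; d, 0, k; 0, 0, 1] * !![0, 1, -k; 1, 0, k; 0, 0, 1] =
          !![a, 0, 0; 0, d, d * f; 0, 0, 1] := by
        rw [← hk]
        ext i j
        fin_cases i <;> fin_cases j <;> simp <;> ring
      have hentry : d = d * (1 - f ^ 2) + d * f * f := by ring
      rw [hprod]
      simpa using hentry

theorem mem_prodInv3_of_minor_eq_one {a b c d : F} (f : F) (hminor : a * d - b * c = 1) :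
    !![a, 0, b; c, 0, d; 0, 1, f] ∈ ProdInv3 F 3 := by
  set M := !![a, 0, b; c, 0, d; 0, 1, f] with hM
  have hMdet : M.det = -1 := by
    calc M.det = -(a * d - b * c) := by
          simp only [hM, det_fin_three, of_apply, cons_val]
          ring
      _ = -1 := by rw [hminor]
  by_cases hb : b = 0
  · by_cases hc : c = 0
    · rw [hM, hb, hc]
      exact block_mem_prodInv3 (by simpa [hb] using hminor) f
    · have h₁ : M *ᵥ ![1, 0, 0] = ![a, c, 0] := by ext i; fin_cases i <;> simp [hM]
      have h₂ : M *ᵥ ![a, c, 0] = ![a * a, a * c, c] := by ext i; fin_cases i <;> simp [hM, hb]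
      refine mem_prodInv3_of_linearIndependent_iterates hMdet (u := ![1, 0, 0]) ?_
      rw [h₁, h₂]
      exact linearIndependent_rows_of_det_ne_zero (A := !![1, 0, 0; a, c, 0; a * a, a * c, c])
        (by simp [det_fin_three, hc])
  · have h₁ : M *ᵥ ![0, 1, 0] = ![0, 0, 1] := by ext i; fin_cases i <;> simp [hM]
    have h₂ : M *ᵥ ![0, 0, 1] = ![b, d, f] := by ext i; fin_cases i <;> simp [hM]
    refine mem_prodInv3_of_linearIndependent_iterates hMdet (u := ![0, 1, 0]) ?_
    rw [h₁, h₂]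
    exact linearIndependent_rows_of_det_ne_zero (A := !![0, 1, 0; 0, 0, 1; b, d, f])
      (by simp [det_fin_three, hb])

theorem isConj_clear_last_row (a b c d e f : F) :
    IsConj !![a, 0, b; c + a * e, 0, d + b * e; 0, 1, f] !![a, 0, b; c, 0, d; e, 1, f] := by
  refine ⟨⟨!![1, 0, 0; -e, 1, 0; 0, 0, 1], !![1, 0, 0; e, 1, 0; 0, 0, 1], ?_, ?_⟩, ?_⟩
  · simp [one_fin_three]
  · simp [one_fin_three]
  · ext i j
    fin_cases i <;> fin_cases j <;> simp <;> ring

theorem mem_prodInv3_of_notMem_center_of_det_eq_neg_one {A : Matrix (Fin 3) (Fin 3) F}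
    (hA : A ∉ Set.center (Matrix (Fin 3) (Fin 3) F)) (hdet : A.det = -1) : A ∈ ProdInv3 F 3 := by
  obtain ⟨v, hv⟩ := exists_linearIndependent_mulVec_of_notMem_center hA
  obtain ⟨w, hw⟩ := exists_linearIndependent_cons_of_lt_finrank hv (by simp)
  obtain ⟨B, hBA, hB⟩ := exists_isConj_col_eq_single A hw
  have hcol : B.col 1 = Pi.single 2 1 := hB 1 2 rfl
  rw [← det_eq_of_isConj hBA] at hdet
  have hB_eq : B = !![B 0 0, 0, B 0 2; B 1 0, 0, B 1 2; B 2 0, 1, B 2 2] := by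
    ext i j
    have h := congrFun hcol i
    fin_cases i <;> fin_cases j <;> simp_all
  refine mem_prodInv3_of_isConj hBA ?_
  rw [hB_eq] at hdet ⊢
  refine mem_prodInv3_of_isConj (isConj_clear_last_row _ _ _ _ _ _) ?_
  refine mem_prodInv3_of_minor_eq_one _ ?_
  simp only [det_fin_three, of_apply, cons_val] at hdet
  linear_combination -hdet

theorem mem_prodInv3_of_notMem_center {A : Matrix (Fin 3) (Fin 3) F}
    (hA : A ∉ Set.center (Matrix (Fin 3) (Fin 3) F)) (hdet : A.det ^ 2 = 1) :
    A ∈ ProdInv3 F 3 := by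
  rcases sq_eq_one_iff.mp hdet with h | h
  · rw [← neg_neg A]
    refine neg_mem_prodInv3 (mem_prodInv3_of_notMem_center_of_det_eq_neg_one ?_ ?_)
    · exact fun hneg => hA (neg_neg A ▸ Set.neg_mem_center hneg)
    · rw [det_neg, h, Fintype.card_fin]
      norm_num
  · exact mem_prodInv3_of_notMem_center_of_det_eq_neg_one hA h

theorem eq_one_or_eq_neg_one_of_mem_center (h3 : (3 : F) ≠ 0) {A : Matrix (Fin 3) (Fin 3) F}
    (hA : A ∈ ProdInv3 F 3) (hcenter : A ∈ Set.center (Matrix (Fin 3) (Fin 3) F)) :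
    A = 1 ∨ A = -1 := by
  rw [center_eq_range] at hcenter
  obtain ⟨c, rfl⟩ := hcenter
  have hc : c ^ 2 = 1 :=
    sq_eq_one_of_smul_one_mem_prodInv3 h3 (by simpa [smul_one_eq_diagonal] using hA)
  rcases sq_eq_one_iff.mp hc with rfl | rfl
  · exact .inl (map_one _)
  · exact .inr (by rw [map_neg, map_one])

end ThreeByThree

theorem stmt14_general (F : Type*) [Field F] (hchar3 : ringChar F ≠ 3)
    (hred : ¬ Irreducible (X ^ 2 + X + 1 : Polynomial F)) :
    LambdaSet F 3 = {1, -1} := by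
  have h3 : (3 : F) ≠ 0 := CharP.cast_ne_zero_of_ne_of_prime F Nat.prime_three hchar3
  obtain ⟨ω, hω⟩ := exists_isPrimitiveRoot_three h3 hred
  refine Set.Subset.antisymm (fun P hP => ?_)
    (Set.pair_subset one_mem_lambdaSet neg_one_mem_lambdaSet)
  have hPprod := mem_prodInv3_of_mem_lambdaSet hP
  refine eq_one_or_eq_neg_one_of_mem_center h3 hPprod ?_
  by_contra hPcenter
  have hdet : P.det ^ 2 = 1 := det_sq_eq_one_of_mem_prodInv3 hPprod
  have hunit : IsUnit P.det := .of_pow_eq_one hdet two_ne_zero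
  have hωP : ω • P⁻¹ ∈ ProdInv3 F 3 := by
    refine mem_prodInv3_of_notMem_center
      (smul_inv_notMem_center hPcenter hunit (hω.ne_zero three_ne_zero)) ?_
    rw [det_smul, det_nonsing_inv, Ring.inverse_eq_inv', Fintype.card_fin, hω.pow_eq_one, one_mul,
      inv_pow, hdet, inv_one]
  have hω_mem : ω • (1 : Matrix (Fin 3) (Fin 3) F) ∈ ProdInv3 F 3 := by
    simpa [mul_nonsing_inv P hunit] using hP _ hωP
  exact hω.pow_ne_one_of_pos_of_lt two_ne_zero (by norm_num)
    (sq_eq_one_of_smul_one_mem_prodInv3 h3 hω_mem)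

theorem stmt14 (F : Type*) [Field F] (hchar2 : ringChar F ≠ 2) (hchar3 : ringChar F ≠ 3)
    (hred : ¬ Irreducible (X ^ 2 + X + 1 : Polynomial F)) :
    LambdaSet F 3 = {1, -1} :=
  stmt14_general F hchar3 hred
end

section
/- Let F be a field with char(F) = 2. Then B_2 = C_2 = D_2; equivalently, a matrix A ∈ M_2(F) is a product of two involutions if and only if det(A) = 1. -/
open Matrix

/-- The set of matrices that are products of two involutions. -/
def ProdInv2 (F : Type*) [Field F] (n : ℕ) : Set (Matrix (Fin n) (Fin n) F) :=
  {A | ∃ J₁ J₂ : Matrix (Fin n) (Fin n) F, J₁ * J₁ = 1 ∧ J₂ * J₂ = 1 ∧ A = J₁ * J₂}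

/-- The set of matrices that are products of four involutions. -/
def ProdInv4 (F : Type*) [Field F] (n : ℕ) : Set (Matrix (Fin n) (Fin n) F) :=
  {A | ∃ J₁ J₂ J₃ J₄ : Matrix (Fin n) (Fin n) F,
    J₁ * J₁ = 1 ∧ J₂ * J₂ = 1 ∧ J₃ * J₃ = 1 ∧ J₄ * J₄ = 1 ∧ A = J₁ * J₂ * J₃ * J₄}

/-!
In characteristic 2 an involution has determinant 1, because `x ^ 2 = 1` forces `x = 1`; hence so
does every product of involutions. Conversely, over any field, a 2 × 2 matrix of trace `0` and
determinant `-1` is an involution by Cayley–Hamilton. If `det A = 1`, it therefore suffices to find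
`J` of trace `0` and determinant `-1` such that `J * A` has trace `0`: then `J` and `J * A` are
involutions with product `A`. The swap serves as `J` when `A` is diagonal; otherwise `J` can be
taken triangular with diagonal `(1, -1)`, its third entry being determined by the trace of `J * A`.
-/

section CommRing

variable {R : Type*} [CommRing R]

theorem mul_self_eq_trace_smul_sub_det_smul_one (A : Matrix (Fin 2) (Fin 2) R) :
    A * A = A.trace • A - A.det • 1 := by
  nontriviality R
  have hchar : A ^ 2 - A.trace • A + A.det • 1 = 0 := by
    simpa [charpoly_fin_two, Algebra.smul_def] using aeval_self_charpoly A
  rw [← sq, ← sub_eq_zero, ← hchar]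
  abel

theorem mul_self_eq_one_of_trace_eq_zero_of_det_eq_neg_one {A : Matrix (Fin 2) (Fin 2) R}
    (htrace : A.trace = 0) (hdet : A.det = -1) : A * A = 1 := by
  rw [mul_self_eq_trace_smul_sub_det_smul_one, htrace, hdet, zero_smul, neg_one_smul, zero_sub,
    neg_neg]

theorem det_eq_one_of_mul_self_eq_one [IsReduced R] [CharP R 2] {m : Type*} [Fintype m]
    [DecidableEq m] {J : Matrix m m R} (hJ : J * J = 1) : J.det = 1 := by
  have hsq : J.det ^ 2 = 1 := by rw [sq, ← det_mul, hJ, det_one]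
  exact frobenius_inj R 2 (hsq.trans (map_one (frobenius R 2)).symm)

end CommRing

section Field

variable {F : Type*} [Field F] {n : ℕ}

theorem prodInv2_subset_prodInv3 : ProdInv2 F n ⊆ ProdInv3 F n := by
  rintro _ ⟨J₁, J₂, h₁, h₂, rfl⟩
  exact ⟨J₁, J₂, 1, h₁, h₂, mul_one 1, (mul_one _).symm⟩

theorem prodInv3_subset_prodInv4 : ProdInv3 F n ⊆ ProdInv4 F n := by
  rintro _ ⟨J₁, J₂, J₃, h₁, h₂, h₃, rfl⟩
  exact ⟨J₁, J₂, J₃, 1, h₁, h₂, h₃, mul_one 1, (mul_one _).symm⟩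

theorem det_eq_one_of_mem_prodInv4 [CharP F 2] {A : Matrix (Fin n) (Fin n) F}
    (hA : A ∈ ProdInv4 F n) : A.det = 1 := by
  obtain ⟨J₁, J₂, J₃, J₄, h₁, h₂, h₃, h₄, rfl⟩ := hA
  simp only [det_mul, det_eq_one_of_mul_self_eq_one h₁, det_eq_one_of_mul_self_eq_one h₂,
    det_eq_one_of_mul_self_eq_one h₃, det_eq_one_of_mul_self_eq_one h₄, mul_one]

theorem mem_prodInv2_of_mul_self_eq_one {A J : Matrix (Fin n) (Fin n) F} (hJ : J * J = 1)
    (hJA : J * A * (J * A) = 1) : A ∈ ProdInv2 F n :=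
  ⟨J, J * A, hJ, hJA, by rw [← mul_assoc, hJ, one_mul]⟩

theorem exists_trace_eq_zero_det_eq_neg_one_trace_mul_eq_zero (A : Matrix (Fin 2) (Fin 2) F) :
    ∃ J : Matrix (Fin 2) (Fin 2) F, J.trace = 0 ∧ J.det = -1 ∧ (J * A).trace = 0 := by
  have trace_mul (p q r t : F) :
      (!![p, q; r, t] * A).trace = p * A 0 0 + q * A 1 0 + r * A 0 1 + t * A 1 1 := by
    simp only [trace_fin_two, mul_apply, Fin.sum_univ_two, of_apply, cons_val, add_assoc]
  by_cases hc : A 1 0 = 0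
  · by_cases hb : A 0 1 = 0
    · exact ⟨!![0, 1; 1, 0], by simp [trace_fin_two], by simp [det_fin_two],
        by rw [trace_mul]; simp [hb, hc]⟩
    · exact ⟨!![1, 0; (A 1 1 - A 0 0) / A 0 1, -1], by simp [trace_fin_two],
        by simp [det_fin_two], by rw [trace_mul]; simp [hb]⟩
  · exact ⟨!![1, (A 1 1 - A 0 0) / A 1 0; 0, -1], by simp [trace_fin_two],
      by simp [det_fin_two], by rw [trace_mul]; simp [hc]⟩

theorem mem_prodInv2_of_det_eq_one {A : Matrix (Fin 2) (Fin 2) F} (hA : A.det = 1) :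
    A ∈ ProdInv2 F 2 := by
  obtain ⟨J, hJ, hJdet, hJA⟩ := exists_trace_eq_zero_det_eq_neg_one_trace_mul_eq_zero A
  have hJAdet : (J * A).det = -1 := by rw [det_mul, hJdet, hA, mul_one]
  exact mem_prodInv2_of_mul_self_eq_one
    (mul_self_eq_one_of_trace_eq_zero_of_det_eq_neg_one hJ hJdet)
    (mul_self_eq_one_of_trace_eq_zero_of_det_eq_neg_one hJA hJAdet)

end Field

theorem stmt16 (F : Type*) [Field F] (hchar : ringChar F = 2) :
    ProdInv2 F 2 = ProdInv3 F 2 ∧ ProdInv3 F 2 = ProdInv4 F 2 ∧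
      ∀ A : Matrix (Fin 2) (Fin 2) F, A ∈ ProdInv2 F 2 ↔ A.det = 1 := by
  have : CharP F 2 := ringChar.of_eq hchar
  have h₂₃ := prodInv2_subset_prodInv3 (F := F) (n := 2)
  have h₃₄ := prodInv3_subset_prodInv4 (F := F) (n := 2)
  have h₄₂ : ProdInv4 F 2 ⊆ ProdInv2 F 2 := fun _ hA ↦
    mem_prodInv2_of_det_eq_one (det_eq_one_of_mem_prodInv4 hA)
  exact ⟨h₂₃.antisymm (h₃₄.trans h₄₂), h₃₄.antisymm (h₄₂.trans h₂₃), fun _ ↦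
    ⟨fun hA ↦ det_eq_one_of_mem_prodInv4 (h₃₄ (h₂₃ hA)), mem_prodInv2_of_det_eq_one⟩⟩
end
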